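/- arXiv:math/0201023 — 2 statements merged into one kernel-verified Lean document; each statement's English description precedes it below -/
import Mathlib

section
/- Let E and F be real Hilbert spaces, let c′ > 0, let A ⊆ E be an unbounded set with 0 ∈ A and μ(A) ≥ 1/c′, and let f : A → F be an ε-nearisometry for some ε ≥ 0 with f 0 = 0. Then there is a linear isometry U : E → F such that |P(f x) − U x| ≤ 2c′ε for all x ∈ A, where P : F → U(E) is the orthogonal projection onto the (closed) range of U. -/
open Filter Metric Bornology RealInnerProductSpace

/-- `f` is an `ε`-nearisometry on `A`. -/
def IsNearisometryOn {E F : Type*} [NormedAddCommGroup E] [NormedAddCommGroup F]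
    (f : E → F) (A : Set E) (ε : ℝ) : Prop :=
  ∀ x ∈ A, ∀ y ∈ A, |‖f x - f y‖ - ‖x - y‖| ≤ ε

/-- `u` is a cluster direction of `A`. -/
def IsClusterDirection {E : Type*} [NormedAddCommGroup E] [NormedSpace ℝ E]
    (A : Set E) (u : E) : Prop :=
  ∃ x : ℕ → E, (∀ j, x j ∈ A) ∧ Tendsto (fun j => ‖x j‖) atTop atTop ∧
    Tendsto (fun j => ‖x j‖⁻¹ • x j) atTop (nhds u)

/-- `μ(A) = μ₁(cd A)`, where `μ₁(X) = inf_{|e|=1} sup {|u ⬝ e| : u ∈ X}` (with `sup ∅ = 0`,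
as is the convention for `Real.sSup`). -/
noncomputable def muDir {E : Type*} [NormedAddCommGroup E] [InnerProductSpace ℝ E]
    (A : Set E) : ℝ :=
  sInf {s | ∃ e : E, ‖e‖ = 1 ∧
    s = sSup {t | ∃ u, IsClusterDirection A u ∧ t = abs ⟪u, e⟫}}

/-- The orthogonal projection of `F` onto the (closed) range `U(E)` of a linear isometry
`U : E →ₗᵢ[ℝ] F` from a complete space, as a map `F → F`. -/
noncomputable def projOntoRange {E F : Type*} [NormedAddCommGroup E] [NormedSpace ℝ E]
    [CompleteSpace E] [NormedAddCommGroup F] [InnerProductSpace ℝ F]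
    (U : E →ₗᵢ[ℝ] F) (v : F) : F :=
  haveI : CompleteSpace (⊤ : Submodule ℝ E) :=
    completeSpace_coe_iff_isComplete.2 (by simpa using completeSpace_iff_isComplete_univ.1 ‹_›)
  haveI : CompleteSpace (Submodule.map U.toLinearMap ⊤) := U.completeSpace_map ⊤
  (Submodule.orthogonalProjectionOnto (Submodule.map U.toLinearMap ⊤) v : F)

section Helpers

variable {E F : Type*} [NormedAddCommGroup E] [InnerProductSpace ℝ E]
  [NormedAddCommGroup F] [InnerProductSpace ℝ F]

/-- Rough inner product comparison. -/
lemma near_inner_bound {f : E → F} {A : Set E} {ε : ℝ} (hε : 0 ≤ ε) (h0A : (0 : E) ∈ A)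
    (hf : IsNearisometryOn f A ε) (hf0 : f 0 = 0) {x y : E} (hx : x ∈ A) (hy : y ∈ A) :
    |⟪f x, f y⟫ - ⟪x, y⟫| ≤ ε * (2 * ‖x‖ + 2 * ‖y‖ + 2 * ε) := by
  have h1 := hf x hx 0 h0A
  have h2 := hf y hy 0 h0A
  have h3 := hf x hx y hy
  rw [hf0, sub_zero, sub_zero] at h1 h2
  have e1 := norm_sub_sq_real (f x) (f y)
  have e2 := norm_sub_sq_real x y
  have t := norm_sub_le x y
  have key : ∀ a b : ℝ, 0 ≤ b → |a - b| ≤ ε → |a ^ 2 - b ^ 2| ≤ ε * (2 * b + ε) := by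
    intro a b hb hab
    have : a ^ 2 - b ^ 2 = (a - b) * (2 * b + (a - b)) := by ring
    rw [this, abs_mul]
    refine mul_le_mul hab ?_ (abs_nonneg _) hε
    refine (abs_add_le _ _).trans ?_
    rw [abs_of_nonneg (by positivity : 0 ≤ 2 * b)]
    linarith
  have k1 := abs_le.1 (key _ _ (norm_nonneg _) h1)
  have k2 := abs_le.1 (key _ _ (norm_nonneg _) h2)
  have k3 := abs_le.1 (key _ _ (norm_nonneg _) h3)
  have t' := mul_le_mul_of_nonneg_left t hε
  rw [abs_le]
  constructor <;> nlinarith [mul_nonneg hε hε]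

/-- Sharp inner product comparison when `y` is far away. -/
lemma near_inner_sharp {f : E → F} {A : Set E} {ε : ℝ} (hε : 0 ≤ ε) (h0A : (0 : E) ∈ A)
    (hf : IsNearisometryOn f A ε) (hf0 : f 0 = 0) {x y : E} (hx : x ∈ A) (hy : y ∈ A) :
    |⟪f y, f x⟫ - ⟪y, x⟫| ≤
      2 * ε * ‖y‖ + (‖f x‖ ^ 2 + ‖x‖ ^ 2 + 4 * ε * ‖x‖ + 4 * ε ^ 2) := by
  have h2 := hf y hy 0 h0A
  have h3 := hf y hy x hx
  rw [hf0, sub_zero, sub_zero] at h2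
  have e1 := norm_sub_sq_real (f y) (f x)
  have e2 := norm_sub_sq_real y x
  have t1 := norm_sub_le y x
  have t2 := abs_norm_sub_norm_le y (y - x)
  rw [sub_sub_cancel] at t2
  have hx0 := norm_nonneg x
  have hs' := norm_nonneg (f y - f x)
  have ht' := norm_nonneg (f y)
  generalize ‖f y - f x‖ = s' at *
  generalize ‖y - x‖ = s at *
  generalize ‖f y‖ = t' at *
  generalize ‖y‖ = t at *
  set a := ‖x‖ with ha
  set b := ‖f x‖ with hb
  have m1 : |(t - s) * ((t' + s') - (t + s))| ≤ a * (2 * ε) := by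
    rw [abs_mul]
    refine mul_le_mul t2 ?_ (abs_nonneg _) hx0
    rw [abs_le] at *
    constructor <;> linarith
  have m2 : |((t' - s') - (t - s)) * (t' + s')| ≤ (2 * ε) * (2 * t + a + 2 * ε) := by
    rw [abs_mul]
    rw [abs_le] at h2 h3
    refine mul_le_mul ?_ ?_ (abs_nonneg _) (by positivity)
    · rw [abs_le]; constructor <;> linarith
    · rw [abs_of_nonneg (by positivity)]; linarith
  rw [abs_le] at *
  constructor <;> nlinarith [sq_nonneg a, sq_nonneg b, sq_nonneg ε, mul_nonneg hε hx0]

lemma near_tendsto_inner {f : E → F} {A : Set E} {ε : ℝ} (hε : 0 ≤ ε) (h0A : (0 : E) ∈ A)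
    (hf : IsNearisometryOn f A ε) (hf0 : f 0 = 0) {ι : Type*} {l : Filter ι}
    {x y : ι → E} {u v : E} (hx : ∀ i, x i ∈ A) (hy : ∀ i, y i ∈ A)
    (hxt : Tendsto (fun i => ‖x i‖) l atTop) (hyt : Tendsto (fun i => ‖y i‖) l atTop)
    (hxu : Tendsto (fun i => ‖x i‖⁻¹ • x i) l (nhds u))
    (hyv : Tendsto (fun i => ‖y i‖⁻¹ • y i) l (nhds v)) :
    Tendsto (fun i => ⟪‖x i‖⁻¹ • f (x i), ‖y i‖⁻¹ • f (y i)⟫) l (nhds ⟪u, v⟫) := by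
  have h1 : Tendsto (fun i => ⟪‖x i‖⁻¹ • x i, ‖y i‖⁻¹ • y i⟫) l (nhds ⟪u, v⟫) := hxu.inner hyv
  have ix := tendsto_inv_atTop_zero.comp hxt
  have iy := tendsto_inv_atTop_zero.comp hyt
  have hb : Tendsto (fun i => ε * (2 * ‖y i‖⁻¹ + 2 * ‖x i‖⁻¹ + 2 * ε * (‖x i‖⁻¹ * ‖y i‖⁻¹)))
      l (nhds 0) := by
    have := (((iy.const_mul 2).add (ix.const_mul 2)).add ((ix.mul iy).const_mul (2 * ε))).const_mul ε
    simpa using this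
  have h2 : Tendsto (fun i => ⟪‖x i‖⁻¹ • f (x i), ‖y i‖⁻¹ • f (y i)⟫ -
      ⟪‖x i‖⁻¹ • x i, ‖y i‖⁻¹ • y i⟫) l (nhds 0) := by
    refine squeeze_zero_norm' ?_ hb
    filter_upwards [hxt.eventually_gt_atTop 0, hyt.eventually_gt_atTop 0] with i hi hj
    simp only [real_inner_smul_left, real_inner_smul_right]
    have := near_inner_bound hε h0A hf hf0 (hx i) (hy i)
    rw [← mul_sub, ← mul_sub, Real.norm_eq_abs, abs_mul, abs_mul, abs_of_pos (inv_pos.2 hi),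
      abs_of_pos (inv_pos.2 hj)]
    calc ‖y i‖⁻¹ * (‖x i‖⁻¹ * |⟪f (x i), f (y i)⟫ - ⟪x i, y i⟫|)
        ≤ ‖y i‖⁻¹ * (‖x i‖⁻¹ * (ε * (2 * ‖x i‖ + 2 * ‖y i‖ + 2 * ε))) := by gcongr
      _ = ε * (2 * ‖y i‖⁻¹ + 2 * ‖x i‖⁻¹ + 2 * ε * (‖x i‖⁻¹ * ‖y i‖⁻¹)) := by
        field_simp
  simpa using h2.add h1

lemma near_exists_limit [CompleteSpace F] {f : E → F} {A : Set E} {ε : ℝ} (hε : 0 ≤ ε)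
    (h0A : (0 : E) ∈ A)
    (hf : IsNearisometryOn f A ε) (hf0 : f 0 = 0)
    {x : ℕ → E} {u : E} (hx : ∀ i, x i ∈ A)
    (hxt : Tendsto (fun i => ‖x i‖) atTop atTop)
    (hxu : Tendsto (fun i => ‖x i‖⁻¹ • x i) atTop (nhds u)) :
    ∃ w : F, Tendsto (fun i => ‖x i‖⁻¹ • f (x i)) atTop (nhds w) := by
  apply cauchySeq_tendsto_of_complete
  rw [cauchySeq_iff_tendsto_dist_atTop_0]
  have p1 : Tendsto (Prod.fst : ℕ × ℕ → ℕ) atTop atTop := by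
    rw [← prod_atTop_atTop_eq]; exact tendsto_fst
  have p2 : Tendsto (Prod.snd : ℕ × ℕ → ℕ) atTop atTop := by
    rw [← prod_atTop_atTop_eq]; exact tendsto_snd
  have a := near_tendsto_inner hε h0A hf hf0 (fun i : ℕ × ℕ => hx i.1) (fun i => hx i.1)
    (hxt.comp p1) (hxt.comp p1) (hxu.comp p1) (hxu.comp p1)
  have b := near_tendsto_inner hε h0A hf hf0 (fun i : ℕ × ℕ => hx i.1) (fun i => hx i.2)
    (hxt.comp p1) (hxt.comp p2) (hxu.comp p1) (hxu.comp p2)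
  have c := near_tendsto_inner hε h0A hf hf0 (fun i : ℕ × ℕ => hx i.2) (fun i => hx i.2)
    (hxt.comp p2) (hxt.comp p2) (hxu.comp p2) (hxu.comp p2)
  have d := ((a.sub (b.const_mul 2)).add c).sqrt
  have e : ⟪u, u⟫ - 2 * ⟪u, u⟫ + ⟪u, u⟫ = 0 := by ring
  rw [e, Real.sqrt_zero] at d
  refine d.congr fun n => ?_
  rw [dist_eq_norm, real_inner_self_eq_norm_sq, real_inner_self_eq_norm_sq, ← norm_sub_sq_real,
    Real.sqrt_sq (norm_nonneg _)]

lemma exists_extension [CompleteSpace E] [CompleteSpace F] {X : Type*} (c : X → E) (φ : X → F)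
    (h : ∀ u v, ⟪φ u, φ v⟫ = ⟪c u, c v⟫) (hd : ∀ e : E, (∀ u, ⟪c u, e⟫ = 0) → e = 0) :
    ∃ U : E →ₗᵢ[ℝ] F, ∀ u, U (c u) = φ u := by
  let L := Finsupp.linearCombination ℝ c
  let M := Finsupp.linearCombination ℝ φ
  have hn : ∀ a, ‖M a‖ = ‖L a‖ := by
    intro a
    have : ‖M a‖ ^ 2 = ‖L a‖ ^ 2 := by
      rw [← real_inner_self_eq_norm_sq, ← real_inner_self_eq_norm_sq]
      simp only [M, L, Finsupp.linearCombination_apply, Finsupp.sum_inner, Finsupp.inner_sum,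
        real_inner_smul_left, real_inner_smul_right, h]
    exact (sq_eq_sq₀ (norm_nonneg _) (norm_nonneg _)).1 this
  have hdense : DenseRange L := by
    have : (LinearMap.range L).topologicalClosure = ⊤ := by
      rw [Submodule.topologicalClosure_eq_top_iff, Submodule.eq_bot_iff]
      intro e he
      apply hd
      intro u
      have := (Submodule.mem_orthogonal _ _).1 he (L (Finsupp.single u 1)) ⟨_, rfl⟩
      simpa [L] using this
    have h2 := (Submodule.dense_iff_topologicalClosure_eq_top).2 this
    rwa [LinearMap.coe_range] at h2
  have hb : ∃ C, ∀ a, ‖M a‖ ≤ C * ‖L a‖ := ⟨1, fun a => by rw [hn, one_mul]⟩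
  have hU := LinearMap.extendOfNorm_eq hdense hb
  refine ⟨⟨(M.extendOfNorm L).toLinearMap, ?_⟩, ?_⟩
  · intro x
    refine hdense.induction (P := fun x => ‖M.extendOfNorm L x‖ = ‖x‖) ?_
      (isClosed_eq (by fun_prop) (by fun_prop)) x
    rintro _ ⟨a, rfl⟩
    rw [hU, hn]
  · intro u
    have := hU (Finsupp.single u 1)
    simpa [L, M] using this

lemma norm_projOntoRange_sub [CompleteSpace E] [CompleteSpace F] (U : E →ₗᵢ[ℝ] F) (v : F) (x : E) :
    ∃ z : E, ‖projOntoRange U v - U x‖ = ‖z‖ ∧ ∀ u, ⟪u, z⟫ = ⟪U u, v⟫ - ⟪u, x⟫ := by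
  let T := U.toContinuousLinearMap
  have hT : ∀ e, T e = U e := fun _ => rfl
  have hP : projOntoRange U v = U (T.adjoint v) := by
    unfold projOntoRange
    haveI : CompleteSpace (⊤ : Submodule ℝ E) :=
      completeSpace_coe_iff_isComplete.2 (by simpa using completeSpace_iff_isComplete_univ.1 ‹_›)
    haveI : CompleteSpace (Submodule.map U.toLinearMap ⊤) := U.completeSpace_map ⊤
    apply Submodule.eq_starProjection_of_mem_of_inner_eq_zero
    · exact ⟨_, trivial, rfl⟩
    · rintro _ ⟨w, -, rfl⟩
      change ⟪v - U (T.adjoint v), U w⟫ = 0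
      rw [inner_sub_left, U.inner_map_map, ContinuousLinearMap.adjoint_inner_left, hT, sub_self]
  refine ⟨T.adjoint v - x, ?_, ?_⟩
  · rw [hP, ← map_sub, U.norm_map]
  · intro u
    rw [inner_sub_right, ContinuousLinearMap.adjoint_inner_right, hT]

/-- The defining property of `muDir`. -/
lemma muDir_mul_norm_le {A : Set E} {z : E} {r : ℝ} (hr : 0 ≤ r)
    (h : ∀ u, IsClusterDirection A u → |⟪u, z⟫| ≤ r) : muDir A * ‖z‖ ≤ r := by
  by_cases hz : z = 0
  · simpa [hz] using hr
  have hz' : 0 < ‖z‖ := norm_pos_iff.2 hz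
  rw [← le_div_iff₀ hz']
  unfold muDir
  refine le_trans (csInf_le (a := sSup {t | ∃ u, IsClusterDirection A u ∧
    t = |⟪u, ‖z‖⁻¹ • z⟫|}) ⟨0, ?_⟩ ⟨‖z‖⁻¹ • z, ?_, rfl⟩) ?_
  · rintro _ ⟨e, -, rfl⟩
    apply Real.sSup_nonneg
    rintro _ ⟨u, -, rfl⟩
    exact abs_nonneg _
  · rw [norm_smul, norm_inv, norm_norm, inv_mul_cancel₀ hz'.ne']
  · apply Real.sSup_le _ (by positivity)
    rintro _ ⟨u, hu, rfl⟩
    rw [real_inner_smul_right, abs_mul, abs_of_pos (inv_pos.2 hz'), inv_mul_eq_div]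
    gcongr
    exact h u hu

end Helpers

/-- Theorem 4.7: if `A ⊆ E` is unbounded with `0 ∈ A` and `μ(A) ≥ 1/c'`, and `f : A → F`
is an `ε`-nearisometry with `f 0 = 0`, then there is a linear isometry `U : E → F` with
`|P (f x) - U x| ≤ 2 c' ε` for all `x ∈ A`, where `P` is the orthogonal projection of `F`
onto `U(E)`. -/
theorem exists_linearIsometry_approx {E F : Type*}
    [NormedAddCommGroup E] [InnerProductSpace ℝ E] [CompleteSpace E]
    [NormedAddCommGroup F] [InnerProductSpace ℝ F] [CompleteSpace F]
    (c' : ℝ) (hc' : 0 < c') (A : Set E) (hA : ¬ IsBounded A) (h0A : (0 : E) ∈ A)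
    (hmu : 1 / c' ≤ muDir A)
    (f : E → F) (ε : ℝ) (hε : 0 ≤ ε) (hf : IsNearisometryOn f A ε) (hf0 : f 0 = 0) :
    ∃ U : E →ₗᵢ[ℝ] F, ∀ x ∈ A, ‖projOntoRange U (f x) - U x‖ ≤ 2 * c' * ε := by
  have hmu0 : 0 < muDir A := lt_of_lt_of_le (by positivity) hmu
  choose s hsA hst hsu using fun u : {u // IsClusterDirection A u} => u.2
  choose φ hφ using fun u => near_exists_limit hε h0A hf hf0 (hsA u) (hst u) (hsu u)
  obtain ⟨U, hU⟩ := exists_extension (fun u : {u // IsClusterDirection A u} => (u : E)) φ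
    (fun u v => tendsto_nhds_unique ((hφ u).inner (hφ v))
      (near_tendsto_inner hε h0A hf hf0 (hsA u) (hsA v) (hst u) (hst v) (hsu u) (hsu v)))
    (fun e he => by
      have := muDir_mul_norm_le (A := A) (z := e) le_rfl
        (fun u hu => by rw [he ⟨u, hu⟩, abs_zero])
      by_contra hne
      exact absurd this (not_le.2 (mul_pos hmu0 (norm_pos_iff.2 hne))))
  refine ⟨U, fun x hx => ?_⟩
  obtain ⟨z, hz, hzi⟩ := norm_projOntoRange_sub U (f x) x
  rw [hz]
  have key : ∀ u, IsClusterDirection A u → |⟪u, z⟫| ≤ 2 * ε := by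
    intro u hu
    rw [hzi, hU ⟨u, hu⟩]
    have l1 := (((hφ ⟨u, hu⟩).inner (𝕜 := ℝ) (tendsto_const_nhds (x := f x))).sub
      ((hsu ⟨u, hu⟩).inner (𝕜 := ℝ) (tendsto_const_nhds (x := x)))).abs
    have l2 : Tendsto (fun j => 2 * ε + (‖f x‖ ^ 2 + ‖x‖ ^ 2 + 4 * ε * ‖x‖ + 4 * ε ^ 2) *
        ‖s ⟨u, hu⟩ j‖⁻¹) atTop (nhds (2 * ε)) := by
      simpa using ((tendsto_inv_atTop_zero.comp (hst ⟨u, hu⟩)).const_mul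
        (‖f x‖ ^ 2 + ‖x‖ ^ 2 + 4 * ε * ‖x‖ + 4 * ε ^ 2)).const_add (2 * ε)
    refine le_of_tendsto_of_tendsto l1 l2 ?_
    filter_upwards [(hst ⟨u, hu⟩).eventually_gt_atTop 0] with j hj
    have b := near_inner_sharp hε h0A hf hf0 hx (hsA ⟨u, hu⟩ j)
    rw [real_inner_smul_left, real_inner_smul_left, ← mul_sub, abs_mul, abs_of_pos (inv_pos.2 hj)]
    refine (mul_le_mul_of_nonneg_left b (inv_pos.2 hj).le).trans (le_of_eq ?_)
    field_simp
  have h1 := muDir_mul_norm_le (by positivity) key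
  have h2 : 1 / c' * ‖z‖ ≤ 2 * ε := (mul_le_mul_of_nonneg_right hmu (norm_nonneg z)).trans h1
  rw [one_div, inv_mul_le_iff₀ hc'] at h2
  linarith
end

section
/- Let E and F be real Hilbert spaces, let c′ > 0, let A ⊆ E be an unbounded set with 0 ∈ A and μ(A) ≥ 1/c′, and let f : A → F be an ε-nearisometry for some ε ≥ 0 with f 0 = 0. Then there is a continuous linear map S : F → E with operator norm ‖S‖ = 1 such that |S(f x) − x| ≤ 2c′ε for all x ∈ A. -/
open Filter Metric Bornology RealInnerProductSpace

theorem aux_dense {E : Type*} [NormedAddCommGroup E] [InnerProductSpace ℝ E] [CompleteSpace E]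
    {A : Set E} (h : 0 < muDir A) :
    DenseRange (Finsupp.linearCombination ℝ (fun u : {u : E // IsClusterDirection A u} => u.1)) := by
  have h1 : (LinearMap.range (Finsupp.linearCombination ℝ
      (fun u : {u : E // IsClusterDirection A u} => u.1))).topologicalClosure = ⊤ := by
    rw [Submodule.topologicalClosure_eq_top_iff, Submodule.eq_bot_iff]
    intro w hw
    by_contra hne
    have hw0 : ‖w‖ ≠ 0 := by simpa using hne
    have key : ∀ u, IsClusterDirection A u → ⟪u, w⟫ = 0 := by
      intro u hu
      refine (Submodule.mem_orthogonal _ _).1 hw u ⟨Finsupp.single ⟨u, hu⟩ 1, ?_⟩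
      simp
    have : muDir A ≤ 0 := by
      have h2 : muDir A ≤ sSup {t | ∃ u, IsClusterDirection A u ∧ t = abs ⟪u, ‖w‖⁻¹ • w⟫} := by
        refine csInf_le ⟨0, ?_⟩ ⟨‖w‖⁻¹ • w, ?_, rfl⟩
        · rintro s ⟨e, -, rfl⟩
          refine Real.sSup_nonneg ?_
          rintro t ⟨u, -, rfl⟩
          exact abs_nonneg _
        · rw [norm_smul, norm_inv, norm_norm, inv_mul_cancel₀ hw0]
      refine h2.trans (Real.sSup_le ?_ le_rfl)
      rintro t ⟨u, hu, rfl⟩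
      rw [real_inner_smul_right, key u hu]; simp
    linarith
  have := (Submodule.dense_iff_topologicalClosure_eq_top).2 h1
  simpa [DenseRange, LinearMap.coe_range] using this

theorem aux_bound {E : Type*} [NormedAddCommGroup E] [InnerProductSpace ℝ E]
    {A : Set E} {c' b : ℝ} (hc' : 0 < c') (hb : 0 ≤ b) (hmu : 1 / c' ≤ muDir A) (w : E)
    (hw : ∀ u, IsClusterDirection A u → |⟪u, w⟫| ≤ b) : ‖w‖ ≤ c' * b := by
  by_cases hne : w = 0
  · subst hne; simp; positivity
  have hw0 : 0 < ‖w‖ := by simpa using hne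
  have h2 : muDir A ≤ sSup {t | ∃ u, IsClusterDirection A u ∧ t = abs ⟪u, ‖w‖⁻¹ • w⟫} := by
    refine csInf_le ⟨0, ?_⟩ ⟨‖w‖⁻¹ • w, ?_, rfl⟩
    · rintro s ⟨e, -, rfl⟩
      refine Real.sSup_nonneg ?_
      rintro t ⟨u, -, rfl⟩
      exact abs_nonneg _
    · rw [norm_smul, norm_inv, norm_norm, inv_mul_cancel₀ hw0.ne']
  have h3 : sSup {t | ∃ u, IsClusterDirection A u ∧ t = abs ⟪u, ‖w‖⁻¹ • w⟫} ≤ ‖w‖⁻¹ * b := by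
    refine Real.sSup_le ?_ (by positivity)
    rintro t ⟨u, hu, rfl⟩
    rw [real_inner_smul_right, abs_mul, abs_of_nonneg (by positivity : 0 ≤ ‖w‖⁻¹)]
    exact mul_le_mul_of_nonneg_left (hw u hu) (by positivity)
  have h4 := hmu.trans (h2.trans h3)
  rw [inv_mul_eq_div, div_le_div_iff₀ hc' hw0] at h4
  linarith

section
variable {E F : Type*} [NormedAddCommGroup E] [InnerProductSpace ℝ E]
  [NormedAddCommGroup F] [InnerProductSpace ℝ F]

theorem aux_sq {a b e : ℝ} (hb : 0 ≤ b) (ha : 0 ≤ a) (h : |a - b| ≤ e) :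
    |a ^ 2 - b ^ 2| ≤ e * (2 * b + e) := by
  have : a ^ 2 - b ^ 2 = (a - b) * (a + b) := by ring
  rw [this, abs_mul, abs_of_nonneg (by positivity : 0 ≤ a + b)]
  have h' := (abs_le.1 h).2
  exact mul_le_mul h (by linarith) (by positivity) ((abs_nonneg _).trans h)

theorem aux_norm {A : Set E} (h0A : (0 : E) ∈ A) {f : E → F} {ε : ℝ}
    (hf : IsNearisometryOn f A ε) (hf0 : f 0 = 0) {x : E} (hx : x ∈ A) :
    |‖f x‖ - ‖x‖| ≤ ε := by
  simpa [hf0] using hf x hx 0 h0A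

theorem aux_inner {A : Set E} (h0A : (0 : E) ∈ A) {f : E → F} {ε : ℝ} (hε : 0 ≤ ε)
    (hf : IsNearisometryOn f A ε) (hf0 : f 0 = 0) {x y : E} (hx : x ∈ A) (hy : y ∈ A) :
    |⟪f x, f y⟫ - ⟪x, y⟫| ≤ 2 * ε * (‖x‖ + ‖y‖) + 2 * ε ^ 2 := by
  have h1 := abs_le.1 (aux_sq (norm_nonneg _) (norm_nonneg _) (aux_norm h0A hf hf0 hx))
  have h2 := abs_le.1 (aux_sq (norm_nonneg _) (norm_nonneg _) (aux_norm h0A hf hf0 hy))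
  have h3 := abs_le.1 (aux_sq (norm_nonneg _) (norm_nonneg _) (hf x hx y hy))
  have h4 := norm_sub_sq_real (f x) (f y)
  have h5 := norm_sub_sq_real x y
  have h6 : ε * ‖x - y‖ ≤ ε * (‖x‖ + ‖y‖) := mul_le_mul_of_nonneg_left (norm_sub_le _ _) hε
  have h7 := sq_nonneg ε
  rw [abs_le]
  constructor <;> nlinarith

theorem aux_tendsto {ι : Type*} {l : Filter ι} {A : Set E} (h0A : (0 : E) ∈ A) {f : E → F} {ε : ℝ}
    (hε : 0 ≤ ε) (hf : IsNearisometryOn f A ε) (hf0 : f 0 = 0) {x y : ι → E}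
    (hx : ∀ j, x j ∈ A) (hy : ∀ j, y j ∈ A)
    (hxt : Tendsto (fun j => ‖x j‖) l atTop) (hyt : Tendsto (fun j => ‖y j‖) l atTop) :
    Tendsto (fun j => ⟪‖x j‖⁻¹ • f (x j), ‖y j‖⁻¹ • f (y j)⟫ - ⟪‖x j‖⁻¹ • x j, ‖y j‖⁻¹ • y j⟫)
      l (nhds 0) := by
  have hxi := hxt.inv_tendsto_atTop
  have hyi := hyt.inv_tendsto_atTop
  have hlim : Tendsto (fun j => 2 * ε * (‖y j‖⁻¹ + ‖x j‖⁻¹) + 2 * ε ^ 2 * (‖x j‖⁻¹ * ‖y j‖⁻¹))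
      l (nhds 0) := by
    have := ((hyi.add hxi).const_mul (2 * ε)).add ((hxi.mul hyi).const_mul (2 * ε ^ 2))
    simpa using this
  refine squeeze_zero_norm' ?_ hlim
  filter_upwards [hxt.eventually_gt_atTop 0, hyt.eventually_gt_atTop 0] with j h1 h2
  have h := aux_inner h0A hε hf hf0 (hx j) (hy j)
  simp only [real_inner_smul_left, real_inner_smul_right]
  have e2 : 2 * ε * (‖y j‖⁻¹ + ‖x j‖⁻¹) + 2 * ε ^ 2 * (‖x j‖⁻¹ * ‖y j‖⁻¹)
    = (‖x j‖⁻¹ * ‖y j‖⁻¹) * (2 * ε * (‖x j‖ + ‖y j‖) + 2 * ε ^ 2) := by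
    field_simp
  have hp : 0 ≤ ‖x j‖⁻¹ * ‖y j‖⁻¹ := by positivity
  have e1 : ∀ p q : ℝ, ‖y j‖⁻¹ * (‖x j‖⁻¹ * p) - ‖y j‖⁻¹ * (‖x j‖⁻¹ * q)
    = (‖x j‖⁻¹ * ‖y j‖⁻¹) * (p - q) := by intros; ring
  rw [e2, e1, Real.norm_eq_abs, abs_mul, abs_of_nonneg hp]
  exact mul_le_mul_of_nonneg_left h hp

theorem aux_limit [CompleteSpace F] {A : Set E} (h0A : (0 : E) ∈ A) {f : E → F} {ε : ℝ}
    (hε : 0 ≤ ε) (hf : IsNearisometryOn f A ε) (hf0 : f 0 = 0) {x : ℕ → E} {u : E}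
    (hx : ∀ j, x j ∈ A) (hxt : Tendsto (fun j => ‖x j‖) atTop atTop)
    (hu : Tendsto (fun j => ‖x j‖⁻¹ • x j) atTop (nhds u)) :
    ∃ v : F, Tendsto (fun j => ‖x j‖⁻¹ • f (x j)) atTop (nhds v) := by
  apply cauchySeq_tendsto_of_complete
  rw [cauchySeq_iff_tendsto_dist_atTop_0]
  rw [← prod_atTop_atTop_eq]
  have h1 : Tendsto (fun p : ℕ × ℕ => ‖x p.1‖) (atTop ×ˢ atTop) atTop := hxt.comp tendsto_fst
  have h2 : Tendsto (fun p : ℕ × ℕ => ‖x p.2‖) (atTop ×ˢ atTop) atTop := hxt.comp tendsto_snd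
  have t11 := aux_tendsto h0A hε hf hf0 (fun p : ℕ × ℕ => hx p.1) (fun p => hx p.1) h1 h1
  have t12 := aux_tendsto h0A hε hf hf0 (fun p : ℕ × ℕ => hx p.1) (fun p => hx p.2) h1 h2
  have t22 := aux_tendsto h0A hε hf hf0 (fun p : ℕ × ℕ => hx p.2) (fun p => hx p.2) h2 h2
  have hu2 : Tendsto (fun p : ℕ × ℕ => ‖‖x p.1‖⁻¹ • x p.1 - ‖x p.2‖⁻¹ • x p.2‖ ^ 2)
      (atTop ×ˢ atTop) (nhds 0) := by
    have := (((hu.comp tendsto_fst).sub (hu.comp (tendsto_snd (f := atTop (α := ℕ))))).norm).pow 2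
    simpa using this
  have hs := ((t11.sub (t12.const_mul 2)).add t22).add hu2
  have hsq : Tendsto (fun p : ℕ × ℕ => ‖‖x p.1‖⁻¹ • f (x p.1) - ‖x p.2‖⁻¹ • f (x p.2)‖ ^ 2)
      (atTop ×ˢ atTop) (nhds 0) := by
    have e0 : (0 : ℝ) - 2 * 0 + 0 + 0 = 0 := by norm_num
    rw [e0] at hs
    refine hs.congr fun p => ?_
    rw [norm_sub_sq_real, norm_sub_sq_real, real_inner_self_eq_norm_sq, real_inner_self_eq_norm_sq,
      real_inner_self_eq_norm_sq, real_inner_self_eq_norm_sq]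
    ring
  have := hsq.sqrt
  simpa [dist_eq_norm, Real.sqrt_sq (norm_nonneg _)] using this

theorem aux_err {A : Set E} (h0A : (0 : E) ∈ A) {f : E → F} {ε : ℝ} (hε : 0 ≤ ε)
    (hf : IsNearisometryOn f A ε) (hf0 : f 0 = 0) {x y : E} (hx : x ∈ A) (hy : y ∈ A) :
    |⟪f x, f y⟫ - ⟪x, y⟫| ≤ 2 * ε * ‖y‖ +
      (‖f x‖ ^ 2 + ‖x‖ ^ 2 + 2 * ε * (‖x‖ + 2 * ε) + 2 * ε * ‖x‖) := by
  have h1 := aux_norm h0A hf hf0 hy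
  have h3 := hf x hx y hy
  have h4 := norm_sub_sq_real (f x) (f y)
  have h5 := norm_sub_sq_real x y
  have hm1 : ‖x - y‖ ≤ ‖x‖ + ‖y‖ := norm_sub_le _ _
  have hm2 : |‖y‖ - ‖x - y‖| ≤ ‖x‖ := by
    have := abs_norm_sub_norm_le y (y - x)
    rwa [norm_sub_rev y x, sub_sub_cancel] at this
  have na := norm_nonneg (f y)
  have nb := norm_nonneg (f x - f y)
  have nx := norm_nonneg x
  have ny := norm_nonneg y
  generalize ‖f x - f y‖ = b at *
  generalize ‖f y‖ = a at *
  generalize ‖x - y‖ = m at *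
  generalize ‖y‖ = n at *
  generalize ‖x‖ = r at *
  have q1 : |((a - n) - (b - m)) * (a + b)| ≤ (2 * ε) * (2 * n + r + 2 * ε) := by
    rw [abs_mul, abs_of_nonneg (by positivity : 0 ≤ a + b)]
    have := abs_sub (a - n) (b - m)
    have i1 := (abs_le.1 h1).2
    have i2 := (abs_le.1 h3).2
    exact mul_le_mul (by linarith) (by linarith) (by positivity) (by positivity)
  have q2 : |(n - m) * ((a - n) + (b - m))| ≤ r * (2 * ε) := by
    rw [abs_mul]
    have := abs_add_le (a - n) (b - m)
    exact mul_le_mul hm2 (by linarith) (abs_nonneg _) nx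
  have q1' := abs_le.1 q1
  have q2' := abs_le.1 q2
  have p1 : 0 ≤ ε * r := by positivity
  have p2 := sq_nonneg ε
  have p3 := sq_nonneg ‖f x‖
  have p4 := sq_nonneg r
  rw [abs_le]
  constructor <;> nlinarith

theorem aux_err_lim {A : Set E} (h0A : (0 : E) ∈ A) {f : E → F} {ε : ℝ}
    (hε : 0 ≤ ε) (hf : IsNearisometryOn f A ε) (hf0 : f 0 = 0) {x : ℕ → E} {u : E} {v : F}
    (hx : ∀ j, x j ∈ A) (hxt : Tendsto (fun j => ‖x j‖) atTop atTop)
    (hu : Tendsto (fun j => ‖x j‖⁻¹ • x j) atTop (nhds u))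
    (hv : Tendsto (fun j => ‖x j‖⁻¹ • f (x j)) atTop (nhds v)) {z : E} (hz : z ∈ A) :
    |⟪f z, v⟫ - ⟪z, u⟫| ≤ 2 * ε := by
  have hl := (((tendsto_const_nhds (x := f z)).inner hv (𝕜 := ℝ)).sub
    ((tendsto_const_nhds (x := z)).inner hu (𝕜 := ℝ))).abs
  have hr := (hxt.inv_tendsto_atTop.mul_const
    (‖f z‖ ^ 2 + ‖z‖ ^ 2 + 2 * ε * (‖z‖ + 2 * ε) + 2 * ε * ‖z‖)).const_add (2 * ε)
  rw [zero_mul, add_zero] at hr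
  refine le_of_tendsto_of_tendsto hl hr ?_
  filter_upwards [hxt.eventually_gt_atTop 0] with j hj
  have h := aux_err h0A hε hf hf0 hz (hx j)
  have hp : 0 ≤ ‖x j‖⁻¹ := by positivity
  simp only [real_inner_smul_right, Pi.inv_apply]
  rw [← mul_sub, abs_mul, abs_of_nonneg hp]
  refine (mul_le_mul_of_nonneg_left h hp).trans (le_of_eq ?_)
  rw [mul_add]
  congr 1
  field_simp

theorem aux_comb {ι : Type*} {a : ι → E} {b : ι → F} (h : ∀ i j, ⟪b i, b j⟫ = ⟪a i, a j⟫)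
    (g : ι →₀ ℝ) :
    ‖Finsupp.linearCombination ℝ b g‖ = ‖Finsupp.linearCombination ℝ a g‖ := by
  rw [← sq_eq_sq₀ (norm_nonneg _) (norm_nonneg _), ← real_inner_self_eq_norm_sq,
    ← real_inner_self_eq_norm_sq]
  simp only [Finsupp.linearCombination_apply, Finsupp.sum, sum_inner, inner_sum,
    real_inner_smul_left, real_inner_smul_right, h]

end

/-- Corollary 4.8: if `A ⊆ E` is unbounded with `0 ∈ A` and `μ(A) ≥ 1/c'`, and `f : A → F`
is an `ε`-nearisometry with `f 0 = 0`, then there is a continuous linear map `S : F → E`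
with `‖S‖ = 1` and `|S (f x) - x| ≤ 2 c' ε` for all `x ∈ A`. -/
theorem exists_linear_retraction_approx {E F : Type*}
    [NormedAddCommGroup E] [InnerProductSpace ℝ E] [CompleteSpace E]
    [NormedAddCommGroup F] [InnerProductSpace ℝ F] [CompleteSpace F]
    (c' : ℝ) (hc' : 0 < c') (A : Set E) (hA : ¬ IsBounded A) (h0A : (0 : E) ∈ A)
    (hmu : 1 / c' ≤ muDir A)
    (f : E → F) (ε : ℝ) (hε : 0 ≤ ε) (hf : IsNearisometryOn f A ε) (hf0 : f 0 = 0) :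
    ∃ S : F →L[ℝ] E, ‖S‖ = 1 ∧ ∀ x ∈ A, ‖S (f x) - x‖ ≤ 2 * c' * ε := by
  have hcpos : 0 < muDir A := lt_of_lt_of_le (by positivity) hmu
  have hd := aux_dense hcpos
  choose x hxA hxt hxu using fun u : {u : E // IsClusterDirection A u} => u.2
  choose φ hφ using fun u : {u : E // IsClusterDirection A u} =>
    aux_limit h0A hε hf hf0 (hxA u) (hxt u) (hxu u)
  have hin : ∀ u v : {u : E // IsClusterDirection A u}, ⟪φ u, φ v⟫ = ⟪u.1, v.1⟫ := by
    intro u v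
    have h1 := aux_tendsto h0A hε hf hf0 (hxA u) (hxA v) (hxt u) (hxt v)
    have h2 := ((hφ u).inner (hφ v) (𝕜 := ℝ)).sub ((hxu u).inner (hxu v) (𝕜 := ℝ))
    exact sub_eq_zero.1 (tendsto_nhds_unique h2 h1)
  have hn := aux_comb hin
  have hb : ∀ g, ‖Finsupp.linearCombination ℝ φ g‖ ≤ 1 * ‖Finsupp.linearCombination ℝ
      (fun u : {u : E // IsClusterDirection A u} => u.1) g‖ := fun g => by rw [hn g, one_mul]
  let T : E →L[ℝ] F := (Finsupp.linearCombination ℝ φ).extendOfNorm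
    (Finsupp.linearCombination ℝ (fun u : {u : E // IsClusterDirection A u} => u.1))
  have hT : ∀ g, T (Finsupp.linearCombination ℝ
      (fun u : {u : E // IsClusterDirection A u} => u.1) g) = Finsupp.linearCombination ℝ φ g :=
    fun g => LinearMap.extendOfNorm_eq hd ⟨1, hb⟩ g
  have hTn : ∀ y, ‖T y‖ = ‖y‖ := by
    intro y
    refine hd.induction (P := fun y => ‖T y‖ = ‖y‖) ?_ (isClosed_eq (by fun_prop) (by fun_prop)) y
    rintro _ ⟨g, rfl⟩
    rw [hT, hn]
  have hTu : ∀ u, T u.1 = φ u := by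
    intro u
    have := hT (Finsupp.single u 1)
    simpa using this
  have hnt : Nontrivial E := by
    by_contra hcon
    rw [not_nontrivial_iff_subsingleton] at hcon
    exact hA (Set.Finite.isBounded A.toFinite)
  refine ⟨ContinuousLinearMap.adjoint T, ?_, ?_⟩
  · rw [LinearIsometryEquiv.norm_map]
    exact (LinearIsometry.mk T.toLinearMap hTn).norm_toContinuousLinearMap
  · intro z hz
    have := aux_bound (b := 2 * ε) hc' (by positivity) hmu
      (ContinuousLinearMap.adjoint T (f z) - z) ?_
    · linarith
    · intro u hu
      rw [real_inner_comm, inner_sub_left, ContinuousLinearMap.adjoint_inner_left, hTu ⟨u, hu⟩]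
      exact aux_err_lim h0A hε hf hf0 (hxA ⟨u, hu⟩) (hxt ⟨u, hu⟩) (hxu ⟨u, hu⟩) (hφ ⟨u, hu⟩) hz
end
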